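/- arXiv:1102.2764 — 2 statements merged into one kernel-verified Lean document; each statement's English description precedes it below -/
import Mathlib

section
/- The gradient map Du⁰ : P° → ℝⁿ, y ↦ (∂u⁰/∂y₁(y),…,∂u⁰/∂yₙ(y)), is a bijection from the interior P° of P onto all of ℝⁿ (indeed a diffeomorphism). -/
noncomputable section

/-- Dot product on `Fin n → ℝ`. -/
def dotp {n : ℕ} (x y : Fin n → ℝ) : ℝ := ∑ j, x j * y j

/-- The affine functions `lᵢ(y) = ⟨y, n⁽ⁱ⁾⟩ + 1`. -/
def lfun {n d : ℕ} (N : Fin d → Fin n → ℤ) (i : Fin d) (y : Fin n → ℝ) : ℝ :=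
  (∑ j, y j * (N i j : ℝ)) + 1

/-- The dual polytope `P = {y : ⟨y, n⁽ⁱ⁾⟩ ≥ -1 for all i}`. -/
def Pset {n d : ℕ} (N : Fin d → Fin n → ℤ) : Set (Fin n → ℝ) :=
  {y | ∀ i, (∑ j, y j * (N i j : ℝ)) ≥ -1}

/-- The function `u⁰(y) = ∑ᵢ lᵢ(y) log lᵢ(y)`. -/
def u0 {n d : ℕ} (N : Fin d → Fin n → ℤ) (y : Fin n → ℝ) : ℝ :=
  ∑ i, lfun N i y * Real.log (lfun N i y)

/-- Second partial derivatives (Hessian matrix) of a function on `Fin n → ℝ`. -/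
def hess {n : ℕ} (f : (Fin n → ℝ) → ℝ) (x : Fin n → ℝ) : Matrix (Fin n) (Fin n) ℝ :=
  Matrix.of fun p q => fderiv ℝ (fun z => fderiv ℝ f z (Pi.single q 1)) x (Pi.single p 1)

/-- The gradient of a function on `Fin n → ℝ`. -/
def grad {n : ℕ} (f : (Fin n → ℝ) → ℝ) (x : Fin n → ℝ) : Fin n → ℝ :=
  fun p => fderiv ℝ f x (Pi.single p 1)

/-!
Let `u = ∑ᵢ lᵢ log lᵢ` for affine functions `lᵢ` on a finite-dimensional space whose linear parts
have the origin in the interior of their convex hull. The linear parts then separate points, and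
the polyhedron `{lᵢ ≥ 0}` is compact.

* Injectivity: `(Du(y) - Du(z))(y - z) = ∑ᵢ (log lᵢ(y) - log lᵢ(z)) (lᵢ(y) - lᵢ(z))` is positive
  for `y ≠ z`, because `log` is strictly increasing.
* Surjectivity: given a functional `φ`, the continuous function `u - φ` attains its minimum on the
  compact polyhedron. The slope of `x log x` at `0` is `-∞`, so the minimum is not attained on the
  boundary, and at an interior minimum `Du = φ`.
* Smoothness of the inverse: `D²u(y)(w, w) = ∑ᵢ (Dlᵢ w)² / lᵢ(y)` is positive definite, so the
  inverse function theorem applies.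
-/

open Set Filter Topology
open scoped ContDiff

section Diffeomorphism

variable {𝕜 E F G : Type*} [RCLike 𝕜] [NormedAddCommGroup E] [NormedSpace 𝕜 E]
  [NormedAddCommGroup F] [NormedSpace 𝕜 F] [NormedAddCommGroup G] [NormedSpace 𝕜 G]

variable (𝕜) in
/-- `f` restricts to a `C^k` diffeomorphism from `U` onto the whole space `F`. The inverse is a
function on `F`; the values of `f` outside `U` are irrelevant. -/
def IsDiffeoOnto (k : WithTop ℕ∞) (f : E → F) (U : Set E) : Prop :=
  BijOn f U univ ∧ ContDiffOn 𝕜 k f U ∧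
    ∃ g : F → E, ContDiff 𝕜 k g ∧ (∀ y ∈ U, g (f y) = y) ∧ ∀ x, g x ∈ U ∧ f (g x) = x

variable {k m : WithTop ℕ∞} {f : E → F} {U : Set E}

theorem IsDiffeoOnto.of_le (hf : IsDiffeoOnto 𝕜 k f U) (hmk : m ≤ k) : IsDiffeoOnto 𝕜 m f U := by
  obtain ⟨hbij, hsmooth, g, hg, hinv⟩ := hf
  exact ⟨hbij, hsmooth.of_le hmk, g, hg.of_le hmk, hinv⟩

theorem IsDiffeoOnto.continuousLinearEquiv_comp (hf : IsDiffeoOnto 𝕜 k f U) (e : F ≃L[𝕜] G) :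
    IsDiffeoOnto 𝕜 k (e ∘ f) U := by
  obtain ⟨hbij, hsmooth, g, hg, hleft, hright⟩ := hf
  refine ⟨e.bijective.bijOn_univ.comp hbij, e.contDiff.comp_contDiffOn hsmooth,
    g ∘ e.symm, hg.comp e.symm.contDiff, fun y hy => ?_, fun x => ⟨(hright _).1, ?_⟩⟩
  · simp [hleft y hy]
  · simp [(hright _).2]

theorem isOpenMap_domRestrict_of_hasStrictFDerivAt [CompleteSpace E] (hU : IsOpen U)
    (hf : ∀ y ∈ U, ∃ e : E ≃L[𝕜] F, HasStrictFDerivAt f (e : E →L[𝕜] F) y) :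
    IsOpenMap (U.domRestrict f) := by
  rw [isOpenMap_iff_nhds_le]
  rintro ⟨y, hy⟩
  obtain ⟨e, he⟩ := hf y hy
  rw [domRestrict_apply, domRestrict_eq, ← map_map,
    map_nhds_subtype_coe_eq_nhds hy (hU.mem_nhds hy), he.map_nhds_eq_of_equiv]

theorem isDiffeoOnto_of_bijOn [CompleteSpace E] (hk : k ≠ 0) (hU : IsOpen U)
    (hbij : BijOn f U univ) (hsmooth : ContDiffOn 𝕜 k f U)
    (hderiv : ∀ y ∈ U, ∃ e : E ≃L[𝕜] F, HasFDerivAt f (e : E →L[𝕜] F) y) :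
    IsDiffeoOnto 𝕜 k f U := by
  have hsmoothAt : ∀ y ∈ U, ContDiffAt 𝕜 k f y := fun y hy => hsmooth.contDiffAt (hU.mem_nhds hy)
  have hopen : IsOpenMap (U.domRestrict f) :=
    isOpenMap_domRestrict_of_hasStrictFDerivAt hU fun y hy =>
      (hderiv y hy).imp fun _ he => (hsmoothAt y hy).hasStrictFDerivAt' he hk
  let Φ : OpenPartialHomeomorph E F :=
    .ofContinuousOpenRestrict (hbij.toPartialEquiv f U univ) hsmooth.continuousOn hopen hU
  have hΦU : ∀ x, Φ.symm x ∈ U := fun x => Φ.map_target (mem_univ x)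
  refine ⟨hbij, hsmooth, Φ.symm, contDiff_iff_contDiffAt.2 fun x => ?_,
    fun y hy => Φ.left_inv hy, fun x => ⟨hΦU x, Φ.right_inv (mem_univ x)⟩⟩
  obtain ⟨e, he⟩ := hderiv _ (hΦU x)
  exact Φ.contDiffAt_symm (mem_univ x) he (hsmoothAt _ (hΦU x))

end Diffeomorphism

section Functionals

variable {E : Type*} [NormedAddCommGroup E] [NormedSpace ℝ E] {s : Set (StrongDual ℝ E)}

theorem exists_pos_mul_norm_le_of_zero_mem_interior_convexHull
    (hs : 0 ∈ interior (convexHull ℝ s)) :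
    ∃ r > 0, ∀ (w : E) (a : ℝ), (∀ φ ∈ s, -a ≤ φ w) → r * ‖w‖ ≤ a := by
  obtain ⟨r, hr, hball⟩ := Metric.nhds_basis_closedBall.mem_iff.1 (mem_interior_iff_mem_nhds.1 hs)
  refine ⟨r, hr, fun w a hw => ?_⟩
  have hhull : ∀ φ ∈ convexHull ℝ s, -a ≤ φ w :=
    convexHull_min hw (convex_halfSpace_ge (ContinuousLinearMap.apply ℝ ℝ w).isLinear (-a))
  obtain ⟨ψ, hψ, hψw⟩ := exists_dual_vector'' ℝ w
  have hmem : -(r • ψ) ∈ Metric.closedBall (0 : StrongDual ℝ E) r := by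
    rw [mem_closedBall_zero_iff, norm_neg, norm_smul, Real.norm_of_nonneg hr.le]
    exact mul_le_of_le_one_right hr.le hψ
  have hle : -a ≤ -(r * ‖w‖) := by simpa [hψw] using hhull _ (hball hmem)
  exact neg_le_neg_iff.1 hle

theorem exists_apply_ne_zero_of_zero_mem_interior_convexHull
    (hs : 0 ∈ interior (convexHull ℝ s)) {w : E} (hw : w ≠ 0) : ∃ φ ∈ s, φ w ≠ 0 := by
  by_contra! hzero
  obtain ⟨r, hr, hbound⟩ := exists_pos_mul_norm_le_of_zero_mem_interior_convexHull hs
  have hle : r * ‖w‖ ≤ 0 := hbound w 0 fun φ hφ => by simp [hzero φ hφ]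
  exact hle.not_gt (mul_pos hr (norm_pos_iff.2 hw))

theorem exists_continuousLinearEquiv_of_forall_apply_self_pos [FiniteDimensional ℝ E]
    (B : E →L[ℝ] StrongDual ℝ E) (hB : ∀ w ≠ 0, 0 < B w w) :
    ∃ e : E ≃L[ℝ] StrongDual ℝ E, (e : E →L[ℝ] StrongDual ℝ E) = B := by
  have hinj : Function.Injective (B : E →ₗ[ℝ] StrongDual ℝ E) := by
    refine (injective_iff_map_eq_zero _).2 fun w hw => ?_
    by_contra hne
    have hBw : B w = 0 := hw
    simpa [hBw] using hB w hne
  have hdim : Module.finrank ℝ E = Module.finrank ℝ (StrongDual ℝ E) :=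
    Subspace.dual_finrank_eq.symm.trans
      (LinearMap.toContinuousLinearMap : Module.Dual ℝ E ≃ₗ[ℝ] StrongDual ℝ E).finrank_eq
  exact ⟨(LinearEquiv.ofInjectiveOfFinrankEq _ hinj hdim).toContinuousLinearEquiv, by ext; rfl⟩

end Functionals

section ConvexHull

variable {ι V W : Type*} [AddCommGroup V] [Module ℝ V] [TopologicalSpace V] [AddCommGroup W]
  [Module ℝ W] [TopologicalSpace W]

theorem zero_mem_interior_convexHull_range_comp {v : ι → V}
    (hv : 0 ∈ interior (convexHull ℝ (range v))) (e : V ≃L[ℝ] W) :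
    0 ∈ interior (convexHull ℝ (range fun i => e (v i))) := by
  have himage : e '' interior (convexHull ℝ (range v)) =
      interior (convexHull ℝ (range fun i => e (v i))) := by
    have hhull : e '' convexHull ℝ (range v) = convexHull ℝ (range fun i => e (v i)) := by
      rw [range_comp' e v]
      exact e.toLinearEquiv.toLinearMap.image_convexHull _
    exact (e.toHomeomorph.image_interior _).trans (congrArg interior hhull)
  exact himage ▸ ⟨0, hv, map_zero e⟩

end ConvexHull

theorem sub_mul_sub_pos_of_strictMonoOn {R : Type*} [Ring R] [LinearOrder R]
    [IsStrictOrderedRing R] {f : R → R} {s : Set R} (hf : StrictMonoOn f s) {a b : R} (ha : a ∈ s)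
    (hb : b ∈ s) (hab : a ≠ b) : 0 < (f a - f b) * (a - b) := by
  rcases hab.lt_or_gt with h | h
  · exact mul_pos_of_neg_of_neg (sub_neg.2 (hf ha hb h)) (sub_neg.2 h)
  · exact mul_pos (sub_pos.2 (hf hb ha h)) (sub_pos.2 h)

section Polyhedron

variable {E ι : Type*} [NormedAddCommGroup E] [NormedSpace ℝ E]

theorem contLinear_sub_apply (f : E →ᴬ[ℝ] ℝ) (y z : E) : f.contLinear (y - z) = f y - f z :=
  f.contLinear_map_vsub y z

theorem continuousAffineMap_lineMap_apply (f : E →ᴬ[ℝ] ℝ) (y z : E) (t : ℝ) :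
    f (AffineMap.lineMap y z t) = (1 - t) * f y + t * f z := by
  rw [f.apply_lineMap, AffineMap.lineMap_apply_module, smul_eq_mul, smul_eq_mul]

/-- The polyhedron cut out by the inequalities `lᵢ ≥ 0`. -/
def polyhedron (l : ι → E →ᴬ[ℝ] ℝ) : Set E := {y | ∀ i, 0 ≤ l i y}

variable {l : ι → E →ᴬ[ℝ] ℝ}

theorem isClosed_polyhedron : IsClosed (polyhedron l) := by
  simp only [polyhedron, ofPred_forall]
  exact isClosed_iInter fun i => isClosed_le continuous_const (l i).continuous

theorem lineMap_mem_polyhedron {y z : E} (hy : y ∈ polyhedron l) (hz : z ∈ polyhedron l) {t : ℝ}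
    (ht : t ∈ Icc (0 : ℝ) 1) : AffineMap.lineMap y z t ∈ polyhedron l := fun i => by
  rw [(l i).apply_lineMap]
  exact (convex_Ici (0 : ℝ)).lineMap_mem (hy i) (hz i) ht

variable [Finite ι]

theorem isOpen_forall_pos : IsOpen {y | ∀ i, 0 < l i y} := by
  simp only [ofPred_forall]
  exact isOpen_iInter_of_finite fun i => isOpen_lt continuous_const (l i).continuous

theorem interior_polyhedron {y₀ : E} (hy₀ : ∀ i, 0 < l i y₀) :
    interior (polyhedron l) = {y | ∀ i, 0 < l i y} := by
  refine Subset.antisymm (fun y hy i => ?_)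
    (interior_maximal (fun y hy i => (hy i).le) isOpen_forall_pos)
  -- The segment from `y₀` to `y` can be prolonged a little beyond `y` inside the polyhedron.
  have hcont : Tendsto (AffineMap.lineMap y₀ y : ℝ → E) (𝓝[>] 1) (𝓝 y) := by
    have h := (AffineMap.lineMap_continuous (R := ℝ) (p := y₀) (q := y)).tendsto 1
    rw [AffineMap.lineMap_apply_one] at h
    exact h.mono_left nhdsWithin_le_nhds
  obtain ⟨t, hmem, ht : 1 < t⟩ :=
    ((hcont.eventually (mem_interior_iff_mem_nhds.1 hy)).and self_mem_nhdsWithin).exists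
  have hnonneg : 0 ≤ (1 - t) * l i y₀ + t * l i y :=
    continuousAffineMap_lineMap_apply (l i) y₀ y t ▸ hmem i
  have hpos : 0 < t * l i y := by linarith [mul_pos (sub_pos.2 ht) (hy₀ i)]
  exact (mul_pos_iff_of_pos_left (one_pos.trans ht)).1 hpos

theorem isCompact_polyhedron [FiniteDimensional ℝ E]
    (hl : 0 ∈ interior (convexHull ℝ (range fun i => (l i).contLinear))) :
    IsCompact (polyhedron l) := by
  have := Fintype.ofFinite ι
  obtain ⟨r, hr, hbound⟩ := exists_pos_mul_norm_le_of_zero_mem_interior_convexHull hl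
  have := FiniteDimensional.proper_real E
  refine Metric.isCompact_of_isClosed_isBounded isClosed_polyhedron <|
    isBounded_iff_forall_norm_le.2 ⟨‖fun i => l i 0‖ / r, fun y hy => ?_⟩
  rw [le_div_iff₀' hr]
  refine hbound y _ (forall_mem_range.2 fun i => ?_)
  have hlin : (l i).contLinear y = l i y - l i 0 := by
    simpa using contLinear_sub_apply (l i) y 0
  have hle : l i 0 ≤ ‖fun i => l i 0‖ :=
    (Real.le_norm_self _).trans (norm_le_pi_norm (fun i => l i 0) i)
  linarith [hy i]

end Polyhedron

section GuilleminPotential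

variable {E ι : Type*} [NormedAddCommGroup E] [NormedSpace ℝ E] [Fintype ι]

/-- Guillemin's potential `∑ᵢ lᵢ log lᵢ` (up to a factor) of the polyhedron `{lᵢ ≥ 0}`. It extends
continuously to the boundary because `0 * log 0 = 0`. -/
def guilleminPotential (l : ι → E →ᴬ[ℝ] ℝ) (y : E) : ℝ := ∑ i, l i y * Real.log (l i y)

variable {l : ι → E →ᴬ[ℝ] ℝ} {y z : E}

theorem continuous_guilleminPotential : Continuous (guilleminPotential l) :=
  continuous_finsetSum _ fun i _ => Real.continuous_mul_log.comp (l i).continuous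

theorem contDiffAt_guilleminPotential (hy : ∀ i, 0 < l i y) {k : WithTop ℕ∞} :
    ContDiffAt ℝ k (guilleminPotential l) y :=
  ContDiffAt.sum fun i _ =>
    (l i).contDiff.contDiffAt.mul ((l i).contDiff.contDiffAt.log (hy i).ne')

theorem hasFDerivAt_guilleminPotential (hy : ∀ i, 0 < l i y) :
    HasFDerivAt (guilleminPotential l) (∑ i, (Real.log (l i y) + 1) • (l i).contLinear) y :=
  HasFDerivAt.fun_sum fun i _ =>
    (Real.hasDerivAt_mul_log (hy i).ne').comp_hasFDerivAt y (l i).hasFDerivAt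

theorem hasFDerivAt_fderiv_guilleminPotential (hy : ∀ i, 0 < l i y) :
    HasFDerivAt (fderiv ℝ (guilleminPotential l))
      (∑ i, ((l i y)⁻¹ • (l i).contLinear).smulRight (l i).contLinear) y := by
  have hformula : fderiv ℝ (guilleminPotential l) =ᶠ[𝓝 y]
      fun z => ∑ i, (Real.log (l i z) + 1) • (l i).contLinear := by
    filter_upwards [isOpen_forall_pos.mem_nhds hy] with z hz
    exact (hasFDerivAt_guilleminPotential hz).fderiv
  refine HasFDerivAt.congr_of_eventuallyEq (HasFDerivAt.fun_sum fun i _ => ?_) hformula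
  exact (((l i).hasFDerivAt.log (hy i).ne').add_const 1).smul_const (l i).contLinear

theorem fderiv_guilleminPotential_sub_apply (hy : ∀ i, 0 < l i y) (hz : ∀ i, 0 < l i z) :
    (fderiv ℝ (guilleminPotential l) y - fderiv ℝ (guilleminPotential l) z) (y - z) =
      ∑ i, (Real.log (l i y) - Real.log (l i z)) * (l i y - l i z) := by
  rw [(hasFDerivAt_guilleminPotential hy).fderiv, (hasFDerivAt_guilleminPotential hz).fderiv,
    ← Finset.sum_sub_distrib]
  simp only [← sub_smul, add_sub_add_right_eq_sub, sum_apply, smul_apply,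
    contLinear_sub_apply, smul_eq_mul]

theorem injOn_fderiv_guilleminPotential
    (hl : 0 ∈ interior (convexHull ℝ (range fun i => (l i).contLinear))) :
    InjOn (fderiv ℝ (guilleminPotential l)) {y | ∀ i, 0 < l i y} := by
  intro y hy z hz heq
  by_contra hne
  obtain ⟨_, ⟨i, rfl⟩, hi⟩ :=
    exists_apply_ne_zero_of_zero_mem_interior_convexHull hl (sub_ne_zero.2 hne)
  rw [contLinear_sub_apply, sub_ne_zero] at hi
  have hterm : ∀ j, l j y ≠ l j z →
      0 < (Real.log (l j y) - Real.log (l j z)) * (l j y - l j z) := fun j =>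
    sub_mul_sub_pos_of_strictMonoOn Real.strictMonoOn_log (hy j) (hz j)
  have hpos : 0 < ∑ j, (Real.log (l j y) - Real.log (l j z)) * (l j y - l j z) := by
    refine Finset.sum_pos' (fun j _ => ?_) ⟨i, Finset.mem_univ i, hterm i hi⟩
    rcases eq_or_ne (l j y) (l j z) with h | h
    · simp [h]
    · exact (hterm j h).le
  rw [← fderiv_guilleminPotential_sub_apply hy hz, heq, sub_self] at hpos
  exact lt_irrefl _ hpos

theorem exists_continuousLinearEquiv_hasFDerivAt_fderiv_guilleminPotential
    [FiniteDimensional ℝ E]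
    (hl : 0 ∈ interior (convexHull ℝ (range fun i => (l i).contLinear)))
    (hy : ∀ i, 0 < l i y) :
    ∃ e : E ≃L[ℝ] StrongDual ℝ E,
      HasFDerivAt (fderiv ℝ (guilleminPotential l)) (e : E →L[ℝ] StrongDual ℝ E) y := by
  obtain ⟨e, he⟩ := exists_continuousLinearEquiv_of_forall_apply_self_pos
      (∑ i, ((l i y)⁻¹ • (l i).contLinear).smulRight (l i).contLinear) fun w hw => by
    obtain ⟨_, ⟨i, rfl⟩, hi⟩ := exists_apply_ne_zero_of_zero_mem_interior_convexHull hl hw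
    have hquad : 0 < ∑ j, (l j y)⁻¹ * (l j).contLinear w ^ 2 :=
      Finset.sum_pos' (fun j _ => mul_nonneg (inv_nonneg.2 (hy j).le) (sq_nonneg _))
        ⟨i, Finset.mem_univ i, mul_pos (inv_pos.2 (hy i)) (sq_pos_of_ne_zero hi)⟩
    simpa [pow_two, mul_assoc] using hquad
  exact ⟨e, he ▸ hasFDerivAt_fderiv_guilleminPotential hy⟩

/-- The summand vanishing at `y` is computed exactly instead of being estimated by convexity; the
resulting gain `t log t` beats every linear term as `t → 0`. -/
theorem guilleminPotential_lineMap_le (hy : y ∈ polyhedron l) (hz : z ∈ polyhedron l)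
    {i : ι} (hi : l i y = 0) {t : ℝ} (ht : t ∈ Ioc (0 : ℝ) 1) :
    guilleminPotential l (AffineMap.lineMap y z t) ≤
      (1 - t) * guilleminPotential l y + t * guilleminPotential l z +
        t * (Real.log t * l i z) := by
  set p := AffineMap.lineMap y z t
  have hlp : ∀ j, l j p = (1 - t) * l j y + t * l j z := fun j =>
    continuousAffineMap_lineMap_apply (l j) y z t
  let gap : ι → ℝ := fun j => (1 - t) * (l j y * Real.log (l j y)) +
    t * (l j z * Real.log (l j z)) - l j p * Real.log (l j p)
  have hgap_nonneg : ∀ j, 0 ≤ gap j := fun j => by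
    simpa only [gap, hlp, sub_nonneg, smul_eq_mul] using
      Real.convexOn_mul_log.2 (hy j) (hz j) (sub_nonneg.2 ht.2) ht.1.le (sub_add_cancel 1 t)
  have hgap_facet : gap i = -(t * (Real.log t * l i z)) := by
    simp only [gap, hlp, hi, zero_mul, mul_zero, zero_add]
    rcases eq_or_ne (l i z) 0 with h | h
    · simp [h]
    · rw [Real.log_mul ht.1.ne' h]
      ring
  have hgap_sum : ∑ j, gap j = (1 - t) * guilleminPotential l y + t * guilleminPotential l z -
      guilleminPotential l p := by
    simp only [gap, guilleminPotential, Finset.sum_sub_distrib, Finset.sum_add_distrib,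
      Finset.mul_sum]
  have hle : gap i ≤ ∑ j, gap j :=
    Finset.single_le_sum (fun j _ => hgap_nonneg j) (Finset.mem_univ i)
  linarith

theorem forall_pos_of_isMinOn_guilleminPotential_sub (hz : ∀ i, 0 < l i z) (φ : StrongDual ℝ E)
    (hy : y ∈ polyhedron l)
    (hmin : IsMinOn (fun x => guilleminPotential l x - φ x) (polyhedron l) y) (i : ι) :
    0 < l i y := by
  by_contra! hle
  have hi : l i y = 0 := hle.antisymm (hy i)
  have hzP : z ∈ polyhedron l := fun j => (hz j).le
  set C := (guilleminPotential l y - φ y) - (guilleminPotential l z - φ z)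
  have hlog : ∀ᶠ t in 𝓝[>] (0 : ℝ), Real.log t < C / l i z :=
    Real.tendsto_log_nhdsGT_zero.eventually (eventually_lt_atBot _)
  obtain ⟨t, hlt, ht⟩ := (hlog.and (Ioc_mem_nhdsGT one_pos)).exists
  have hseg := guilleminPotential_lineMap_le hy hzP hi ht
  have hmin_t := hmin (lineMap_mem_polyhedron hy hzP ⟨ht.1.le, ht.2⟩)
  have hφ : φ (AffineMap.lineMap y z t) = (1 - t) * φ y + t * φ z :=
    continuousAffineMap_lineMap_apply φ.toContinuousAffineMap y z t
  have hgain : t * C ≤ t * (Real.log t * l i z) := by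
    simp only [mem_ofPred_eq, hφ] at hmin_t
    linarith
  exact (le_of_mul_le_mul_left hgain ht.1).not_gt ((lt_div_iff₀ (hz i)).1 hlt)

theorem exists_fderiv_guilleminPotential_eq [FiniteDimensional ℝ E]
    (hl : 0 ∈ interior (convexHull ℝ (range fun i => (l i).contLinear)))
    (hz : ∀ i, 0 < l i z) (φ : StrongDual ℝ E) :
    ∃ y, (∀ i, 0 < l i y) ∧ fderiv ℝ (guilleminPotential l) y = φ := by
  obtain ⟨y, hyP, hmin⟩ := (isCompact_polyhedron hl).exists_isMinOn ⟨z, fun i => (hz i).le⟩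
    ((continuous_guilleminPotential (l := l)).sub φ.continuous).continuousOn
  have hy : ∀ i, 0 < l i y := forall_pos_of_isMinOn_guilleminPotential_sub hz φ hyP hmin
  have hnhds : polyhedron l ∈ 𝓝 y :=
    mem_of_superset (isOpen_forall_pos.mem_nhds hy) fun x hx i => (hx i).le
  have hdiff := (hasFDerivAt_guilleminPotential hy).differentiableAt.hasFDerivAt
  exact ⟨y, hy, sub_eq_zero.1
    ((hmin.isLocalMin hnhds).hasFDerivAt_eq_zero (hdiff.sub φ.hasFDerivAt))⟩

theorem gradient_u0_bijective_general [FiniteDimensional ℝ E]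
    (hl : 0 ∈ interior (convexHull ℝ (range fun i => (l i).contLinear)))
    (hne : ∃ y₀, ∀ i, 0 < l i y₀) :
    IsDiffeoOnto ℝ ω (fderiv ℝ (guilleminPotential l)) (interior (polyhedron l)) := by
  obtain ⟨y₀, hy₀⟩ := hne
  have := FiniteDimensional.complete ℝ E
  rw [interior_polyhedron hy₀]
  refine isDiffeoOnto_of_bijOn (by simp) isOpen_forall_pos
    ⟨mapsTo_univ _ _, injOn_fderiv_guilleminPotential hl,
      fun φ _ => exists_fderiv_guilleminPotential_eq hl hy₀ φ⟩
    (fun y hy => ?_)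
    fun y hy => exists_continuousLinearEquiv_hasFDerivAt_fderiv_guilleminPotential hl hy
  exact ((contDiffAt_guilleminPotential hy).fderiv_right le_rfl).contDiffWithinAt

end GuilleminPotential

section Coordinates

variable {n d : ℕ}

variable (n) in
/-- The dot product as an identification of `ℝⁿ` with its dual. -/
def dotProductStrongDual : (Fin n → ℝ) ≃L[ℝ] StrongDual ℝ (Fin n → ℝ) :=
  (dotProductEquiv ℝ (Fin n) ≪≫ₗ LinearMap.toContinuousLinearMap).toContinuousLinearEquiv

/-- `lfun N i` as a bundled continuous affine map. -/
def lfunAffine (N : Fin d → Fin n → ℤ) (i : Fin d) : (Fin n → ℝ) →ᴬ[ℝ] ℝ :=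
  (dotProductStrongDual n fun j => (N i j : ℝ)).toContinuousAffineMap + .const ℝ _ 1

theorem lfunAffine_apply (N : Fin d → Fin n → ℤ) (i : Fin d) (y : Fin n → ℝ) :
    lfunAffine N i y = lfun N i y :=
  congrArg (· + 1) (dotProduct_comm (fun j => (N i j : ℝ)) y)

theorem contLinear_lfunAffine (N : Fin d → Fin n → ℤ) (i : Fin d) :
    (lfunAffine N i).contLinear = dotProductStrongDual n fun j => (N i j : ℝ) := by
  simp [lfunAffine]

theorem lfunAffine_zero_pos (N : Fin d → Fin n → ℤ) (i : Fin d) : 0 < lfunAffine N i 0 := by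
  simp [lfunAffine_apply, lfun]

theorem zero_mem_interior_convexHull_contLinear_lfunAffine {N : Fin d → Fin n → ℤ}
    (hN : (0 : Fin n → ℝ) ∈ interior (convexHull ℝ (range fun i => fun j => (N i j : ℝ)))) :
    0 ∈ interior (convexHull ℝ (range fun i => (lfunAffine N i).contLinear)) := by
  simp only [contLinear_lfunAffine]
  exact zero_mem_interior_convexHull_range_comp hN (dotProductStrongDual n)

theorem Pset_eq_polyhedron (N : Fin d → Fin n → ℤ) : Pset N = polyhedron (lfunAffine N) := by
  ext y
  simp only [Pset, polyhedron, lfunAffine_apply, lfun, mem_ofPred_eq, ge_iff_le,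
    neg_le_iff_add_nonneg]

theorem u0_eq_guilleminPotential (N : Fin d → Fin n → ℤ) :
    u0 N = guilleminPotential (lfunAffine N) := by
  ext y
  simp only [u0, guilleminPotential, lfunAffine_apply]

theorem grad_eq_dotProductStrongDual_symm_comp (f : (Fin n → ℝ) → ℝ) :
    grad f = (dotProductStrongDual n).symm ∘ fderiv ℝ f := rfl

end Coordinates

/-- The gradient map `Du⁰ : P° → ℝⁿ` is a bijection onto all of `ℝⁿ`, indeed a
diffeomorphism: it is smooth on `P°` and has a smooth global inverse. -/
theorem gradient_u0_bijective {n d : ℕ} (hn : 1 ≤ n) (N : Fin d → Fin n → ℤ)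
    (hQ : (0 : Fin n → ℝ) ∈ interior (convexHull ℝ (Set.range fun i => fun j => (N i j : ℝ)))) :
    Set.BijOn (grad (u0 N)) (interior (Pset N)) Set.univ ∧
    ContDiffOn ℝ (⊤ : ℕ∞) (grad (u0 N)) (interior (Pset N)) ∧
    ∃ g : (Fin n → ℝ) → (Fin n → ℝ), ContDiff ℝ (⊤ : ℕ∞) g ∧
      (∀ y ∈ interior (Pset N), g (grad (u0 N) y) = y) ∧
      (∀ x, g x ∈ interior (Pset N) ∧ grad (u0 N) (g x) = x) := by
  rw [Pset_eq_polyhedron, u0_eq_guilleminPotential, grad_eq_dotProductStrongDual_symm_comp]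
  exact ((gradient_u0_bijective_general (zero_mem_interior_convexHull_contLinear_lfunAffine hQ)
    ⟨0, lfunAffine_zero_pos N⟩).continuousLinearEquiv_comp _).of_le le_top
end
end

section
/- There exists a unique vector c = (c₁,…,cₙ) ∈ ℝⁿ such that ∫_P yᵢ e^{⟨c,y⟩} dy = 0 for every i = 1,…,n; moreover c is the unique minimum point of the function F(s) := ∫_P e^{⟨s,y⟩} dy. -/
/-!
Let `φ` be a finite-dimensional linear family of functions and `F s = ∫ exp (φ s) ∂μ`. Integrating
`exp (φ c) * (1 + φ (s - c)) ≤ exp (φ s)` shows that `F` lies strictly above its tangent planes, so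
a critical point is the unique minimum point, and there is at most one. A minimum point exists
because `exp x ≥ max x 0` and `s ↦ ∫ max (φ s) 0 ∂μ` is convex and positively homogeneous: if each
`φ s` with `s ≠ 0` is positive on a set of positive measure, this function is bounded below by a
positive multiple of the norm. A minimum point is critical because `F` can be differentiated under
the integral sign. For `φ s y = ⟨s, y⟩` on a neighbourhood `P` of the origin, every open half-space
whose boundary contains the origin meets `P` in positive volume.
-/

open MeasureTheory

noncomputable section

open Filter Real Set Topology

section Convexity

variable {Ω V : Type*} [MeasurableSpace Ω] {μ : Measure Ω}

theorem convexOn_integral [AddCommGroup V] [Module ℝ V] {S : Set V} {f : V → Ω → ℝ}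
    (hS : Convex ℝ S) (hint : ∀ s ∈ S, Integrable (f s) μ)
    (hconv : ∀ ω, ConvexOn ℝ S fun s ↦ f s ω) :
    ConvexOn ℝ S fun s ↦ ∫ ω, f s ω ∂μ := by
  refine ⟨hS, fun s hs t ht a b ha hb hab ↦ ?_⟩
  have hints := (hint s hs).const_mul a
  have hintt := (hint t ht).const_mul b
  calc ∫ ω, f (a • s + b • t) ω ∂μ
      ≤ ∫ ω, (a * f s ω + b * f t ω) ∂μ :=
        integral_mono (hint _ (hS hs ht ha hb hab)) (hints.add hintt)
          fun ω ↦ (hconv ω).2 hs ht ha hb hab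
    _ = a • ∫ ω, f s ω ∂μ + b • ∫ ω, f t ω ∂μ := by
        rw [integral_add hints hintt, integral_const_mul, integral_const_mul, smul_eq_mul,
          smul_eq_mul]

theorem exists_pos_forall_mul_norm_le_of_pos_homogeneous [NormedAddCommGroup V] [NormedSpace ℝ V]
    [ProperSpace V] {g : V → ℝ} (hcont : Continuous g)
    (hhom : ∀ t : ℝ, 0 ≤ t → ∀ s, g (t • s) = t * g s)
    (hpos : ∀ s, s ≠ 0 → 0 < g s) :
    ∃ m > 0, ∀ s, m * ‖s‖ ≤ g s := by
  obtain ⟨m, hm, hle⟩ : ∃ m > 0, ∀ u ∈ Metric.sphere (0 : V) 1, m ≤ g u :=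
    (isCompact_sphere 0 1).exists_forall_le' hcont.continuousOn
      fun u hu ↦ hpos u (ne_zero_of_mem_unit_sphere ⟨u, hu⟩)
  refine ⟨m, hm, fun s ↦ ?_⟩
  obtain rfl | hs := eq_or_ne s 0
  · simpa using (hhom 0 le_rfl 0).ge
  have hunit : ‖s‖⁻¹ • s ∈ Metric.sphere (0 : V) 1 := by
    simpa using norm_smul_inv_norm (𝕜 := ℝ) hs
  calc m * ‖s‖ ≤ g (‖s‖⁻¹ • s) * ‖s‖ := by gcongr; exact hle _ hunit
    _ = g s := by
      rw [hhom _ (by positivity), mul_right_comm, inv_mul_cancel₀ (norm_ne_zero_iff.2 hs), one_mul]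

end Convexity

section PartitionFunction

variable {Ω V : Type*} [MeasurableSpace Ω] {μ : Measure Ω}

/-- The partition function `s ↦ ∫ exp (φ s) ∂μ` of the exponential family generated by a linear
family `φ` of functions on `Ω`. The parameter space `V` is kept apart from `Ω`, on which only the
measure matters. -/
def partitionFunction [AddCommGroup V] [Module ℝ V] (μ : Measure Ω) (φ : V →ₗ[ℝ] Ω → ℝ) (s : V) :
    ℝ :=
  ∫ ω, exp (φ s ω) ∂μ

section Module

variable [AddCommGroup V] [Module ℝ V] {φ : V →ₗ[ℝ] Ω → ℝ}

theorem integrable_mul_exp (hexp : ∀ s, Integrable (fun ω ↦ exp (φ s ω)) μ) (c d : V) :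
    Integrable (fun ω ↦ φ d ω * exp (φ c ω)) μ := by
  have hmeas : AEMeasurable (φ d) μ := aemeasurable_of_aemeasurable_exp (hexp d).aemeasurable
  refine ((hexp (d + c)).add (hexp (-d + c))).mono'
    (hmeas.aestronglyMeasurable.mul (hexp c).aestronglyMeasurable) (ae_of_all _ fun ω ↦ ?_)
  have habs : |φ d ω| ≤ exp (φ d ω) + exp (-φ d ω) := by
    rw [abs_le]
    constructor <;>
      linarith [add_one_le_exp (φ d ω), add_one_le_exp (-φ d ω), exp_pos (φ d ω),
        exp_pos (-φ d ω)]
  calc ‖φ d ω * exp (φ c ω)‖ = |φ d ω| * exp (φ c ω) := by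
        rw [norm_mul, norm_eq_abs, norm_eq_abs, abs_exp]
    _ ≤ (exp (φ d ω) + exp (-φ d ω)) * exp (φ c ω) := by gcongr
    _ = exp (φ (d + c) ω) + exp (φ (-d + c) ω) := by
        simp only [map_add, map_neg, Pi.add_apply, Pi.neg_apply, exp_add, add_mul]

theorem integrable_max_zero (hexp : ∀ s, Integrable (fun ω ↦ exp (φ s ω)) μ) (s : V) :
    Integrable (fun ω ↦ max (φ s ω) 0) μ := by
  simpa using (integrable_mul_exp hexp 0 s).pos_part

theorem partitionFunction_add_integral_lt (hexp : ∀ s, Integrable (fun ω ↦ exp (φ s ω)) μ)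
    {c s : V} (hne : μ {ω | φ (s - c) ω ≠ 0} ≠ 0) :
    partitionFunction μ φ c + ∫ ω, φ (s - c) ω * exp (φ c ω) ∂μ < partitionFunction μ φ s := by
  have hint := integrable_mul_exp hexp c (s - c)
  have hgap (ω : Ω) : exp (φ s ω) - (exp (φ c ω) + φ (s - c) ω * exp (φ c ω)) =
      exp (φ c ω) * (exp (φ (s - c) ω) - (φ (s - c) ω + 1)) := by
    have hsplit : exp (φ s ω) = exp (φ c ω) * exp (φ (s - c) ω) := by simp [← exp_add]
    rw [hsplit]
    ring
  have hgap_pos :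
      0 < ∫ ω, (exp (φ s ω) - (exp (φ c ω) + φ (s - c) ω * exp (φ c ω))) ∂μ := by
    rw [integral_pos_iff_support_of_nonneg]
    · refine hne.bot_lt.trans_le (measure_mono fun ω hω ↦ ?_)
      rw [Function.mem_support, hgap]
      exact (mul_pos (exp_pos _) (sub_pos.2 (add_one_lt_exp hω))).ne'
    · intro ω
      simp only [hgap]
      exact mul_nonneg (exp_pos _).le (sub_nonneg.2 (add_one_le_exp _))
    · exact (hexp s).sub ((hexp c).add hint)
  rwa [integral_sub (hexp s) ((hexp c).fun_add hint), integral_add (hexp c) hint,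
    sub_pos] at hgap_pos

theorem convexOn_partitionFunction (hexp : ∀ s, Integrable (fun ω ↦ exp (φ s ω)) μ) :
    ConvexOn ℝ univ (partitionFunction μ φ) :=
  convexOn_integral convex_univ (fun s _ ↦ hexp s)
    fun ω ↦ convexOn_exp.comp_linearMap ((LinearMap.proj ω : (Ω → ℝ) →ₗ[ℝ] ℝ) ∘ₗ φ)

theorem hasDerivAt_partitionFunction_line (hexp : ∀ s, Integrable (fun ω ↦ exp (φ s ω)) μ)
    (c d : V) :
    HasDerivAt (fun t : ℝ ↦ partitionFunction μ φ (c + t • d)) (∫ ω, φ d ω * exp (φ c ω) ∂μ) 0 := by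
  have hline (t : ℝ) (ω : Ω) : φ (c + t • d) ω = φ c ω + t * φ d ω := by simp
  have hderiv (t : ℝ) (ω : Ω) : HasDerivAt (fun t : ℝ ↦ exp (φ (c + t • d) ω))
      (φ d ω * exp (φ (c + t • d) ω)) t := by
    simp only [hline]
    simpa [mul_comm] using (((hasDerivAt_id t).mul_const (φ d ω)).const_add (φ c ω)).exp
  have hbound (t : ℝ) (ht : t ∈ Icc (-1 : ℝ) 1) (ω : Ω) :
      ‖φ d ω * exp (φ (c + t • d) ω)‖ ≤
        ‖φ d ω * exp (φ (c + d) ω)‖ + ‖φ d ω * exp (φ (c - d) ω)‖ := by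
    have hexp_le : exp (φ (c + t • d) ω) ≤ exp (φ (c + d) ω) + exp (φ (c - d) ω) := by
      obtain hd | hd := le_total 0 (φ d ω)
      · refine (exp_le_exp.2 ?_).trans (le_add_of_nonneg_right (exp_pos _).le)
        simpa using mul_le_of_le_one_left hd ht.2
      · refine (exp_le_exp.2 ?_).trans (le_add_of_nonneg_left (exp_pos _).le)
        simp only [hline, map_sub, Pi.sub_apply]
        nlinarith [ht.1]
    simpa only [norm_mul, norm_eq_abs, abs_exp, ← mul_add] using
      mul_le_mul_of_nonneg_left hexp_le (abs_nonneg (φ d ω))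
  have hint := integrable_mul_exp hexp
  simpa only [partitionFunction, zero_smul, add_zero] using
    (hasDerivAt_integral_of_dominated_loc_of_deriv_le
    (Icc_mem_nhds (by norm_num) (by norm_num))
    (Eventually.of_forall fun t ↦ (hexp (c + t • d)).aestronglyMeasurable)
    (hexp (c + (0 : ℝ) • d)) (hint (c + (0 : ℝ) • d) d).aestronglyMeasurable
    (ae_of_all μ fun ω t ht ↦ hbound t ht ω) ((hint (c + d) d).norm.add (hint (c - d) d).norm)
    (ae_of_all μ fun ω t _ ↦ hderiv t ω)).2

theorem integral_mul_exp_eq_zero_of_forall_le (hexp : ∀ s, Integrable (fun ω ↦ exp (φ s ω)) μ)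
    {c : V} (hmin : ∀ s, partitionFunction μ φ c ≤ partitionFunction μ φ s) (d : V) :
    ∫ ω, φ d ω * exp (φ c ω) ∂μ = 0 :=
  IsLocalMin.hasDerivAt_eq_zero
    (Eventually.of_forall fun t : ℝ ↦ by simpa using hmin (c + t • d))
    (hasDerivAt_partitionFunction_line hexp c d)

end Module

section Normed

variable [NormedAddCommGroup V] [NormedSpace ℝ V] [FiniteDimensional ℝ V] {φ : V →ₗ[ℝ] Ω → ℝ}

theorem exists_pos_forall_mul_norm_le_integral_max_zero
    (hexp : ∀ s, Integrable (fun ω ↦ exp (φ s ω)) μ) (hpos : ∀ s ≠ 0, 0 < μ {ω | 0 < φ s ω}) :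
    ∃ m > 0, ∀ s, m * ‖s‖ ≤ ∫ ω, max (φ s ω) 0 ∂μ := by
  have hconv : ConvexOn ℝ univ fun s ↦ ∫ ω, max (φ s ω) 0 ∂μ :=
    convexOn_integral convex_univ (fun s _ ↦ integrable_max_zero hexp s) fun ω ↦
      ((LinearMap.proj ω ∘ₗ φ).convexOn convex_univ).sup (convexOn_const 0 convex_univ)
  refine exists_pos_forall_mul_norm_le_of_pos_homogeneous hconv.locallyLipschitz.continuous
    (fun t ht s ↦ ?_) fun s hs ↦ ?_
  · rw [← integral_const_mul]
    simp [mul_max_of_nonneg _ _ ht]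
  · refine (integral_pos_iff_support_of_nonneg (fun ω ↦ le_max_right (φ s ω) 0)
      (integrable_max_zero hexp s)).2 ?_
    exact (hpos s hs).trans_le (measure_mono fun ω hω ↦ (lt_max_of_lt_left hω).ne')

theorem tendsto_partitionFunction_cocompact (hexp : ∀ s, Integrable (fun ω ↦ exp (φ s ω)) μ)
    (hpos : ∀ s ≠ 0, 0 < μ {ω | 0 < φ s ω}) :
    Tendsto (partitionFunction μ φ) (cocompact V) atTop := by
  obtain ⟨m, hm, hle⟩ := exists_pos_forall_mul_norm_le_integral_max_zero hexp hpos
  refine tendsto_atTop_mono (fun s ↦ (hle s).trans ?_)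
    (tendsto_norm_cocompact_atTop.const_mul_atTop hm)
  exact integral_mono (integrable_max_zero hexp s) (hexp s) fun ω ↦
    max_le ((le_add_of_nonneg_right zero_le_one).trans (add_one_le_exp _)) (exp_pos _).le

theorem exists_forall_partitionFunction_le (hexp : ∀ s, Integrable (fun ω ↦ exp (φ s ω)) μ)
    (hpos : ∀ s ≠ 0, 0 < μ {ω | 0 < φ s ω}) :
    ∃ c, ∀ s, partitionFunction μ φ c ≤ partitionFunction μ φ s :=
  (convexOn_partitionFunction hexp).locallyLipschitz.continuous.exists_forall_le
    (tendsto_partitionFunction_cocompact hexp hpos)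

end Normed

end PartitionFunction

theorem measure_restrict_setOf_pos_pos {E : Type*} [AddCommGroup E] [Module ℝ E]
    [TopologicalSpace E] [ContinuousSMul ℝ E] [MeasurableSpace E] [OpensMeasurableSpace E]
    {μ : Measure E} [μ.IsOpenPosMeasure] {P : Set E} (h0 : 0 ∈ interior P) {f : E →ₗ[ℝ] ℝ}
    (hcont : Continuous f) (hf : f ≠ 0) :
    0 < μ.restrict P {y | 0 < f y} := by
  have hopen : IsOpen {y | 0 < f y} := isOpen_lt continuous_const hcont
  obtain ⟨x, hx⟩ : ∃ x, f x = 1 := f.surjective hf 1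
  have hray : Tendsto (fun t : ℝ ↦ t • x) (𝓝[>] 0) (𝓝 0) := by
    have hsmul : Continuous fun t : ℝ ↦ t • x := by fun_prop
    simpa using (hsmul.tendsto 0).mono_left nhdsWithin_le_nhds
  obtain ⟨t, htP, ht⟩ :=
    ((hray.eventually (isOpen_interior.mem_nhds h0)).and self_mem_nhdsWithin).exists
  have hmem : t • x ∈ {y | 0 < f y} ∩ interior P := ⟨by simpa [hx] using ht, htP⟩
  rw [Measure.restrict_apply hopen.measurableSet]
  exact ((hopen.inter isOpen_interior).measure_pos μ ⟨_, hmem⟩).trans_le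
    (measure_mono (inter_subset_inter_right _ interior_subset))

section DotProduct

variable {n : ℕ}

/-- `dotp` as a linear family of functions on `Fin n → ℝ`, parametrized by its first argument. -/
def dotpFamily (n : ℕ) : (Fin n → ℝ) →ₗ[ℝ] (Fin n → ℝ) → ℝ :=
  LinearMap.ltoFun ℝ (Fin n → ℝ) ℝ ℝ ∘ₗ dotProductBilin ℝ ℝ

theorem dotpFamily_apply (s y : Fin n → ℝ) : dotpFamily n s y = dotp s y := rfl

theorem dotp_single_one_left (i : Fin n) (y : Fin n → ℝ) : dotp (Pi.single i 1) y = y i :=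
  single_one_dotProduct i y

theorem continuous_dotp (s : Fin n → ℝ) : Continuous (dotp s) :=
  continuous_const.dotProduct continuous_id

theorem integrableOn_exp_dotp {μ : Measure (Fin n → ℝ)} [IsFiniteMeasureOnCompacts μ]
    {P : Set (Fin n → ℝ)} (hP : IsCompact P) (s : Fin n → ℝ) :
    IntegrableOn (fun y ↦ exp (dotp s y)) P μ :=
  (continuous_dotp s).rexp.continuousOn.integrableOn_compact hP

theorem measure_restrict_setOf_dotp_pos_pos {μ : Measure (Fin n → ℝ)} [μ.IsOpenPosMeasure]
    {P : Set (Fin n → ℝ)} (h0 : 0 ∈ interior P) {s : Fin n → ℝ} (hs : s ≠ 0) :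
    0 < μ.restrict P {y | 0 < dotp s y} :=
  measure_restrict_setOf_pos_pos (f := dotProductBilin ℝ ℝ s) h0 (continuous_dotp s)
    fun h ↦ hs (dotProduct_eq_zero s fun y ↦ DFunLike.congr_fun h y)

theorem integral_dotp_mul_exp_eq_sum {μ : Measure (Fin n → ℝ)}
    (hexp : ∀ s, Integrable (fun y ↦ exp (dotp s y)) μ) (c d : Fin n → ℝ) :
    ∫ y, dotp d y * exp (dotp c y) ∂μ = ∑ i, d i * ∫ y, y i * exp (dotp c y) ∂μ := by
  have hint (i : Fin n) : Integrable (fun y ↦ y i * exp (dotp c y)) μ := by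
    simpa only [dotpFamily_apply, dotp_single_one_left] using
      integrable_mul_exp (φ := dotpFamily n) hexp c (Pi.single i 1)
  simp only [dotp, Finset.sum_mul, mul_assoc] at hint ⊢
  rw [integral_finsetSum _ fun i _ ↦ (hint i).const_mul (d i)]
  simp only [integral_const_mul]

theorem integral_exp_dotp_lt_of_forall_integral_eq_zero {μ : Measure (Fin n → ℝ)}
    (hexp : ∀ s, Integrable (fun y ↦ exp (dotp s y)) μ)
    (hpos : ∀ s ≠ 0, 0 < μ {y | 0 < dotp s y}) {c s : Fin n → ℝ}
    (hc : ∀ i, ∫ y, y i * exp (dotp c y) ∂μ = 0) (hs : s ≠ c) :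
    ∫ y, exp (dotp c y) ∂μ < ∫ y, exp (dotp s y) ∂μ := by
  have hne : μ {y | dotp (s - c) y ≠ 0} ≠ 0 :=
    ((hpos _ (sub_ne_zero.2 hs)).trans_le (measure_mono fun y hy ↦ ne_of_gt hy)).ne'
  have hzero : ∫ y, dotp (s - c) y * exp (dotp c y) ∂μ = 0 := by
    simp [integral_dotp_mul_exp_eq_sum hexp, hc]
  simpa only [partitionFunction, dotpFamily_apply, hzero, add_zero] using
    partitionFunction_add_integral_lt (φ := dotpFamily n) hexp hne

end DotProduct

theorem exists_unique_soliton_vector_general {n : ℕ} {μ : Measure (Fin n → ℝ)}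
    (hexp : ∀ s, Integrable (fun y ↦ exp (dotp s y)) μ)
    (hpos : ∀ s ≠ 0, 0 < μ {y | 0 < dotp s y}) :
    ∃ c : Fin n → ℝ,
      (∀ i, ∫ y, y i * exp (dotp c y) ∂μ = 0) ∧
      (∀ c' : Fin n → ℝ, (∀ i, ∫ y, y i * exp (dotp c' y) ∂μ = 0) → c' = c) ∧
      (∀ s : Fin n → ℝ, s ≠ c → ∫ y, exp (dotp c y) ∂μ < ∫ y, exp (dotp s y) ∂μ) := by
  obtain ⟨c, hmin⟩ := exists_forall_partitionFunction_le (φ := dotpFamily n) hexp hpos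
  have hcrit (i : Fin n) : ∫ y, y i * exp (dotp c y) ∂μ = 0 := by
    simpa only [dotpFamily_apply, dotp_single_one_left] using
      integral_mul_exp_eq_zero_of_forall_le hexp hmin (Pi.single i 1)
  refine ⟨c, hcrit, fun c' hcrit' ↦ ?_, fun s hs ↦
    integral_exp_dotp_lt_of_forall_integral_eq_zero hexp hpos hcrit hs⟩
  by_contra hne
  exact (integral_exp_dotp_lt_of_forall_integral_eq_zero hexp hpos hcrit' (Ne.symm hne)).not_ge
    (hmin c')

/-- There is a unique `c ∈ ℝⁿ` with `∫_P yᵢ e^{⟨c,y⟩} dy = 0` for all `i`; moreover `c`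
is the unique minimum point of `F(s) = ∫_P e^{⟨s,y⟩} dy`. -/
theorem exists_unique_soliton_vector {n : ℕ} (V : Finset (Fin n → ℝ)) (P : Set (Fin n → ℝ))
    (hP : P = convexHull ℝ (V : Set (Fin n → ℝ)))
    (h0 : (0 : Fin n → ℝ) ∈ interior P) :
    ∃ c : Fin n → ℝ,
      (∀ i, ∫ y in P, y i * Real.exp (dotp c y) = 0) ∧
      (∀ c' : Fin n → ℝ, (∀ i, ∫ y in P, y i * Real.exp (dotp c' y) = 0) → c' = c) ∧
      (∀ s : Fin n → ℝ, s ≠ c →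
        (∫ y in P, Real.exp (dotp c y)) < ∫ y in P, Real.exp (dotp s y)) := by
  have hcompact : IsCompact P := hP ▸ V.finite_toSet.isCompact_convexHull (𝕜 := ℝ)
  exact exists_unique_soliton_vector_general (integrableOn_exp_dotp hcompact)
    fun _ ↦ measure_restrict_setOf_dotp_pos_pos h0
end
end
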